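/- arXiv:1512.05122 — 2 statements merged into one kernel-verified Lean document; each statement's English description precedes it below -/
import Mathlib

section
/- Assume the ordinal α meshes with the ordinal β, and that α+β ↘ₙˣ 0. Then α+β ↘ₙˣ α, and consequently β ↘ₙˣ 0. -/
/-!
The proof rests on the identity `{α + β}(n) = α + {β}(n)`, valid when `α` meshes with `β ≠ 0`
(`fs_add`). Meshing says that no summand of `α` is absorbed in `α + β`, so the last summand of
`α + β` is the last summand of `β`, and this is the one that `{·}(n)` acts on. Since
`{β}(n) < β` (`fs_spec`), `α` still meshes with `{β}(n)`, and the identity iterates: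
as long as the descent from `β` has not hit `0` before step `y`,
`fund (α + β) n y = α + fund β n y` (`fund_add`).

If the descent from `α + β` hits `0` at step `y`, then the descent from `β` has hit `0` at some step
`i ≤ y`: otherwise `α + fund β n y = 0`, which forces `fund β n y = 0`. At the first such `i` the
descent from `α + β` is at `α + 0 = α`.
-/

namespace Paper

/-- `pred? o = some β` when the notation `o` denotes a successor ordinal `β + 1`;
`pred? o = none` when `o` denotes `0` or a limit ordinal. -/
def pred? : ONote → Option ONote
  | ONote.zero => none
  | ONote.oadd e m a =>
    match a with
    | ONote.oadd e' m' a' => (pred? (ONote.oadd e' m' a')).map (ONote.oadd e m)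
    | ONote.zero => if e = 0 then some (ONote.ofNat ((m : ℕ) - 1)) else none

/-- The fundamental sequence: `fs α n` is `{α}(n)`.  We have `{0}(n) = 0`,
`{β+1}(n) = β`, `{γ + ω^(δ+1)}(n) = γ + ω^δ·(n+1)` and `{γ + ω^δ}(n) = γ + ω^({δ}(n))`
for `δ` a limit. -/
def fs : ONote → ℕ → ONote
  | ONote.zero, _ => ONote.zero
  | ONote.oadd e m a, n =>
    match a with
    | ONote.oadd e' m' a' => ONote.oadd e m (fs (ONote.oadd e' m' a') n)
    | ONote.zero =>
      match e with
      | ONote.zero => ONote.ofNat ((m : ℕ) - 1)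
      | ONote.oadd e1 m1 a1 =>
        let tail : ONote :=
          match pred? (ONote.oadd e1 m1 a1) with
          | some p => ONote.oadd p ⟨n + 1, n.succ_pos⟩ ONote.zero
          | none => ONote.oadd (fs (ONote.oadd e1 m1 a1) n) 1 ONote.zero
        if (m : ℕ) = 1 then tail
        else ONote.oadd (ONote.oadd e1 m1 a1) ⟨max ((m : ℕ) - 1) 1, by omega⟩ tail

/-- Iteration of the fundamental sequence: `fund α n x` applies `{·}(n)` to `α`, `x` times. -/
def fund (α : ONote) (n : ℕ) : ℕ → ONote
  | 0 => α
  | x + 1 => fs (fund α n x) n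

/-- `StepAt α n x β` expresses `α ↘ₙˣ β`: some `y ≤ x` has `fund α n y = β`. -/
def StepAt (α : ONote) (n x : ℕ) (β : ONote) : Prop :=
  ∃ y ≤ x, fund α n y = β

/-- `Step α n β` expresses `α ↘ₙ β`. -/
def Step (α : ONote) (n : ℕ) (β : ONote) : Prop :=
  ∃ x, StepAt α n x β


/-- The smallest exponent in the Cantor normal form of a notation. -/
def lastExp : ONote → ONote
  | ONote.zero => ONote.zero
  | ONote.oadd e _ ONote.zero => e
  | ONote.oadd _ _ (ONote.oadd e' m' a') => lastExp (ONote.oadd e' m' a')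

/-- `α` meshes with `γ` if `α = 0`, or `γ < ω^(α₀+1)` where `α₀` is the smallest
exponent in the Cantor normal form of `α`. -/
def Meshes (α γ : ONote) : Prop :=
  α = 0 ∨ γ < ONote.oadd (lastExp α + 1) 1 0

open ONote Ordinal

/-! ### Unfolding the fundamental sequences -/

/-- `{ω^e}(n)` for a nonzero exponent `e`. -/
def powTail (e : ONote) (n : ℕ) : ONote :=
  match pred? e with
  | some p => oadd p ⟨n + 1, n.succ_pos⟩ 0
  | none => oadd (fs e n) 1 0

theorem fs_cons (e : ONote) (m : ℕ+) {a : ONote} (ha : a ≠ 0) (n : ℕ) :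
    fs (oadd e m a) n = oadd e m (fs a n) := by
  cases a with
  | zero => exact absurd rfl ha
  | oadd e' m' a' => rw [fs]

theorem fs_nat (m : ℕ+) (n : ℕ) : fs (oadd 0 m 0) n = ofNat ((m : ℕ) - 1) := by
  change fs (oadd ONote.zero m ONote.zero) n = _
  rw [fs]

theorem fs_pow_one {e : ONote} (he : e ≠ 0) (n : ℕ) : fs (oadd e 1 0) n = powTail e n := by
  cases e with
  | zero => exact absurd rfl he
  | oadd e1 m1 a1 =>
    change fs (oadd (oadd e1 m1 a1) 1 ONote.zero) n = _
    rw [fs]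
    rfl

theorem fs_pow_succ {e : ONote} (he : e ≠ 0) (k : ℕ+) (n : ℕ) :
    fs (oadd e (k + 1) 0) n = oadd e k (powTail e n) := by
  cases e with
  | zero => exact absurd rfl he
  | oadd e1 m1 a1 =>
    change fs (oadd (oadd e1 m1 a1) (k + 1) ONote.zero) n = _
    have hk : 0 < (k : ℕ) := k.pos
    rw [fs]
    rw [if_neg (by rw [PNat.add_coe, PNat.one_coe]; omega)]
    congr 1
    apply PNat.eq
    rw [PNat.mk_coe, PNat.add_coe, PNat.one_coe]
    omega

/-! ### The fundamental sequences descend and preserve normal forms -/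

theorem ofNat_pred_lt (m : ℕ+) : ONote.repr (ofNat ((m : ℕ) - 1)) < ONote.repr (oadd 0 m 0) := by
  have hm : (m : ℕ) - 1 < m := Nat.sub_lt m.pos Nat.one_pos
  rw [repr_ofNat]
  calc (((m : ℕ) - 1 : ℕ) : Ordinal) < ((m : ℕ) : Ordinal) := Nat.cast_lt.2 hm
    _ = ONote.repr (oadd 0 m 0) := by simp [ONote.repr]

theorem pred?_spec : ∀ {o p : ONote}, o.NF → pred? o = some p → p.NF ∧ ONote.repr p < ONote.repr o
  | ONote.zero, p, _, h => by simp [pred?] at h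
  | oadd e m ONote.zero, p, ho, h => by
    rw [pred?] at h
    split_ifs at h with he
    obtain rfl := Option.some.inj h
    subst he
    exact ⟨inferInstance, ofNat_pred_lt m⟩
  | oadd e m (oadd e' m' a'), p, ho, h => by
    rw [pred?, Option.map_eq_some_iff] at h
    obtain ⟨q, hq, rfl⟩ := h
    obtain ⟨hq1, hq2⟩ := pred?_spec ho.snd hq
    exact ⟨ho.fst.oadd _ (NF.below_of_lt' (hq2.trans ho.snd'.repr_lt) hq1), oadd_lt_oadd_3 hq2⟩

theorem powTail_below {e : ONote} {n : ℕ} (he : e.NF)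
    (h : (fs e n).NF ∧ ONote.repr (fs e n) < ONote.repr e) : NFBelow (powTail e n) (ONote.repr e) := by
  rw [powTail]
  split
  · next p hp =>
    obtain ⟨h1, h2⟩ := pred?_spec he hp
    exact NFBelow.oadd h1 NFBelow.zero h2
  · exact NFBelow.oadd h.1 NFBelow.zero h.2

theorem fs_spec (n : ℕ) : ∀ {o : ONote}, o.NF → o ≠ 0 → (fs o n).NF ∧ ONote.repr (fs o n) < ONote.repr o
  | ONote.zero, _, h => absurd rfl h
  | oadd e m (oadd e' m' a'), ho, _ => by
    obtain ⟨h1, h2⟩ := fs_spec n ho.snd (by rintro ⟨⟩)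
    rw [fs_cons e m (by rintro ⟨⟩)]
    exact ⟨ho.fst.oadd _ (NF.below_of_lt' (h2.trans ho.snd'.repr_lt) h1), oadd_lt_oadd_3 h2⟩
  | oadd e m ONote.zero, ho, _ => by
    rw [zero_def]
    by_cases he : e = 0
    · subst he
      rw [fs_nat]
      exact ⟨inferInstance, ofNat_pred_lt m⟩
    · have ht := powTail_below ho.fst (fs_spec n ho.fst he)
      induction m using PNat.recOn with
      | one =>
        rw [fs_pow_one he]
        exact ⟨⟨⟨_, ht⟩⟩, ht.repr_lt.trans_le (omega0_le_oadd e 1 0)⟩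
      | succ k _ =>
        rw [fs_pow_succ he]
        have hnf : (oadd e k (powTail e n)).NF := ho.fst.oadd _ ht
        exact ⟨hnf, oadd_lt_oadd_2 hnf (by simp)⟩

/-! ### Addition and meshing -/

theorem addAux_below {e o : ONote} (m : ℕ+) (he : e.NF) (h : NFBelow o (ONote.repr e)) :
    addAux e m o = oadd e m o := by
  cases o with
  | zero => rfl
  | oadd e' m' a' =>
    have hc := @cmp_compares e e' he h.fst
    have hlt : e' < e := h.lt
    cases hcmp : ONote.cmp e e' <;> rw [hcmp] at hc
    · exact absurd hlt (lt_asymm hc)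
    · exact absurd hlt (by rw [show e = e' from hc]; exact lt_irrefl _)
    · simp only [addAux, hcmp]

theorem addAux_same {e : ONote} (he : e.NF) (m k : ℕ+) (b : ONote) :
    addAux e m (oadd e k b) = oadd e (m + k) b := by
  have hc := @cmp_compares e e he he
  cases hcmp : ONote.cmp e e <;> rw [hcmp] at hc
  · exact absurd hc (lt_irrefl _)
  · simp only [addAux, hcmp]
  · exact absurd hc (lt_irrefl _)

theorem add_zero_note : ∀ {o : ONote}, o.NF → o + 0 = o
  | ONote.zero, _ => rfl
  | oadd e m a, h => by rw [oadd_add, add_zero_note h.snd, addAux_below m h.fst h.snd']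

theorem eq_zero_of_add_eq_zero {a b : ONote} (ha : a.NF) (hb : b.NF) (h : a + b = 0) : b = 0 := by
  have h1 : ONote.repr a + ONote.repr b = 0 := by rw [← repr_add, h, repr_zero]
  have h2 : ONote.repr b = ONote.repr 0 := by
    rw [repr_zero]
    exact nonpos_iff_eq_zero.1 (h1 ▸ le_add_self)
  exact repr_inj.1 h2

theorem add_ne_zero_of_right {a b : ONote} (ha : a.NF) (hb : b.NF) (h : b ≠ 0) : a + b ≠ 0 :=
  fun h' => h (eq_zero_of_add_eq_zero ha hb h')

theorem lastExp_nf : ∀ {a : ONote}, a.NF → (lastExp a).NF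
  | ONote.zero, _ => NF.zero
  | oadd _ _ ONote.zero, h => by rw [lastExp]; exact h.fst
  | oadd _ _ (oadd _ _ _), h => by rw [lastExp]; exact lastExp_nf h.snd

theorem lastExp_lt : ∀ {a : ONote} {b : Ordinal}, NFBelow a b → a ≠ 0 → ONote.repr (lastExp a) < b
  | ONote.zero, _, _, h => absurd rfl h
  | oadd _ _ ONote.zero, _, h, _ => by rw [lastExp]; exact h.lt
  | oadd _ _ (oadd _ _ _), _, h, _ => by
    rw [lastExp]
    exact (lastExp_lt h.snd (by rintro ⟨⟩)).trans h.lt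

/-- Meshing with a nonzero `a` bounds the leading exponent of `b` by the last exponent of `a`. -/
theorem meshes_below {a b : ONote} (ha : a.NF) (hb : b.NF) (hm : Meshes a b) (h0 : a ≠ 0) :
    NFBelow b (ONote.repr (lastExp a) + 1) := by
  have := lastExp_nf ha
  have h := hm.resolve_left h0
  rw [lt_def] at h
  refine NF.below_of_lt' ?_ hb
  simpa [ONote.repr] using h

theorem Meshes.mono {a b c : ONote} (hm : Meshes a b) (h : c ≤ b) : Meshes a c :=
  hm.imp_right h.trans_lt

/-! ### The fundamental sequence of a sum -/

theorem fs_add_pow {e : ONote} (he : e.NF) (m k : ℕ+) (n : ℕ) :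
    fs (oadd e (m + k) 0) n = addAux e m (fs (oadd e k 0) n) := by
  by_cases h0 : e = 0
  · subst h0
    rw [fs_nat, fs_nat]
    induction k using PNat.recOn with
    | one =>
      obtain ⟨j, rfl⟩ : ∃ j, m = Nat.succPNat j := ⟨m.natPred, (PNat.succPNat_natPred m).symm⟩
      rfl
    | succ k _ =>
      obtain ⟨j, rfl⟩ : ∃ j, m = Nat.succPNat j := ⟨m.natPred, (PNat.succPNat_natPred m).symm⟩
      obtain ⟨i, rfl⟩ : ∃ i, k = Nat.succPNat i := ⟨k.natPred, (PNat.succPNat_natPred k).symm⟩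
      have h1 : ((Nat.succPNat j + (Nat.succPNat i + 1) : ℕ+) : ℕ) - 1 = Nat.succ (j + i + 1) := by
        simp only [PNat.add_coe, Nat.succPNat_coe, PNat.one_coe]
        omega
      have h2 : ((Nat.succPNat i + 1 : ℕ+) : ℕ) - 1 = Nat.succ i := by
        simp only [PNat.add_coe, Nat.succPNat_coe, PNat.one_coe]
        omega
      rw [h1, h2, ofNat_succ, ofNat_succ, addAux_same NF.zero]
      congr 1
      apply PNat.eq
      simp only [PNat.add_coe, Nat.succPNat_coe]
      omega
  · have ht := powTail_below he (fs_spec n he h0)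
    induction k using PNat.recOn with
    | one => rw [fs_pow_succ h0, fs_pow_one h0, addAux_below m he ht]
    | succ k _ => rw [← add_assoc, fs_pow_succ h0, fs_pow_succ h0, addAux_same he]

theorem fs_add (n : ℕ) : ∀ {a b : ONote}, a.NF → b.NF → Meshes a b → b ≠ 0 →
    fs (a + b) n = a + fs b n
  | ONote.zero, _, _, _, _, _ => rfl
  | oadd e m (oadd e' m' a'), b, ha, hb, hm, hb0 => by
    have hne : oadd e' m' a' ≠ 0 := by rintro ⟨⟩
    obtain ⟨hf, hlt⟩ := fs_spec n hb hb0
    -- Dropping the first summand keeps the last exponent, so the tail meshes with `b` as well.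
    have hm' : Meshes (oadd e' m' a') b := Or.inr (by
      have := hm.resolve_left (by rintro ⟨⟩)
      rwa [lastExp] at this)
    have hbe : NFBelow b (ONote.repr e) :=
      (meshes_below ha.snd hb hm' hne).mono (Order.add_one_le_of_lt (lastExp_lt ha.snd' hne))
    have hfe : NFBelow (fs b n) (ONote.repr e) := NF.below_of_lt' (hlt.trans hbe.repr_lt) hf
    rw [oadd_add e m, oadd_add e m, addAux_below m ha.fst (add_nfBelow ha.snd' hbe),
      addAux_below m ha.fst (add_nfBelow ha.snd' hfe),
      fs_cons e m (add_ne_zero_of_right ha.snd hb hb0), fs_add n ha.snd hb hm' hb0]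
  | oadd e m ONote.zero, b, ha, hb, hm, hb0 => by
    change fs (addAux e m b) n = addAux e m (fs b n)
    have hbelow := meshes_below ha hb hm (by rintro ⟨⟩)
    rw [lastExp] at hbelow
    cases b with
    | zero => exact absurd rfl hb0
    | oadd e' k c =>
      obtain hlt | heq := (Order.lt_add_one_iff.1 hbelow.lt).lt_or_eq
      · have hbe : NFBelow (oadd e' k c) (ONote.repr e) := NF.below_of_lt hlt hb
        obtain ⟨hf, hlt⟩ := fs_spec n hb hb0
        rw [addAux_below m ha.fst hbe, fs_cons e m hb0,
          addAux_below m ha.fst (NF.below_of_lt' (hlt.trans hbe.repr_lt) hf)]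
      · obtain rfl : e' = e := (@repr_inj e' e hb.fst ha.fst).1 heq
        rw [addAux_same ha.fst]
        by_cases hc : c = 0
        · subst hc
          exact fs_add_pow ha.fst m k n
        · rw [fs_cons _ _ hc, fs_cons _ _ hc, addAux_same ha.fst]

/-! ### Iteration -/

theorem fund_spec {b : ONote} (hb : b.NF) (n : ℕ) : ∀ y, (fund b n y).NF ∧ fund b n y ≤ b
  | 0 => ⟨hb, le_rfl⟩
  | y + 1 => by
    obtain ⟨h1, h2⟩ := fund_spec hb n y
    rw [fund]
    by_cases h0 : fund b n y = 0
    · rw [h0] at h2 ⊢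
      exact ⟨NF.zero, h2⟩
    · obtain ⟨h3, h4⟩ := fs_spec n h1 h0
      exact ⟨h3, (le_of_lt (lt_def.2 h4)).trans h2⟩

theorem fund_add {a b : ONote} (ha : a.NF) (hb : b.NF) (hm : Meshes a b) (n : ℕ) :
    ∀ y, (∀ i < y, fund b n i ≠ 0) → fund (a + b) n y = a + fund b n y
  | 0, _ => rfl
  | y + 1, h => by
    obtain ⟨h1, h2⟩ := fund_spec hb n y
    rw [fund, fund, fund_add ha hb hm n y fun i hi => h i (hi.trans y.lt_succ_self),
      fs_add n ha h1 (hm.mono h2) (h y y.lt_succ_self)]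

/-- If `α` meshes with `β` and `α+β ↘ₙˣ 0`, then `α+β ↘ₙˣ α` and `β ↘ₙˣ 0`. -/
theorem stepAt_add_to_zero (α β : ONote) (hα : α.NF) (hβ : β.NF)
    (hm : Meshes α β) (n x : ℕ) (h : StepAt (α + β) n x 0) :
    StepAt (α + β) n x α ∧ StepAt β n x 0 := by
  obtain ⟨y, hyx, hy⟩ := h
  have hex : ∃ i ≤ y, fund β n i = 0 := by
    by_contra! hne
    rw [fund_add hα hβ hm n y fun i hi => hne i hi.le] at hy
    exact hne y le_rfl (eq_zero_of_add_eq_zero hα (fund_spec hβ n y).1 hy)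
  classical
  obtain ⟨hi, hi0⟩ := Nat.find_spec hex
  have hmin : ∀ j < Nat.find hex, fund β n j ≠ 0 := fun j hj hj0 =>
    Nat.find_min hex hj ⟨hj.le.trans hi, hj0⟩
  refine ⟨⟨_, hi.trans hyx, ?_⟩, ⟨_, hi.trans hyx, hi0⟩⟩
  rw [fund_add hα hβ hm n _ hmin, hi0, add_zero_note hα]

end Paper
end

section
/- For all ordinals α, β < ε₀ and natural numbers n, x: if ω^α ↘ₙˣ 0 and α ↘ₙ β, then ω^α ↘ₙˣ ω^β and α ↘ₙˣ 0. -/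
/-!
Along the `n`-path from `ω^α` to `0`, the exponents of the visited powers of `ω` run through the
whole `n`-path of `α`. Indeed, for `α ≠ 0` the path visits `ω^({α}(n))`
(`exists_fund_omega_pow_fs`): this is the first step if `α` is a limit, and if `α = p + 1` the
first step is `ω^p·(n+1)`, whose summands have to be removed one by one before `0` is reached
(`exists_fund_mul`). Iterating gives the first claim. As each step on `α` costs at least one step
on `ω^α`, the path from `α` arrives at `0` no later than the one from `ω^α`, which is the second.
-/

namespace Paper

/-- On successors the fundamental sequence is the predecessor; `NF` is not needed. -/
theorem fs_of_pred? {α p : ONote} (n : ℕ) (h : pred? α = some p) : fs α n = p := by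
  induction α generalizing p with
  | zero => simp [pred?] at h
  | oadd e m a _ iha =>
    cases a with
    | zero =>
      cases e with
      | zero =>
        have h0 : (ONote.zero : ONote) = 0 := rfl
        simpa [pred?, fs, h0] using h
      | oadd e1 m1 a1 =>
        have h0 : ONote.oadd e1 m1 a1 ≠ 0 := by intro h; cases h
        simp [pred?, h0] at h
    | oadd e' m' a' =>
      rw [pred?, Option.map_eq_some_iff] at h
      obtain ⟨q, hq, rfl⟩ := h
      rw [fs, iha hq]

theorem fund_add_s7 (α : ONote) (n y z : ℕ) : fund α n (y + z) = fund (fund α n y) n z := by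
  induction z with
  | zero => rfl
  | succ z ih => rw [← Nat.add_assoc, fund, ih, fund]

theorem fund_succ (α : ONote) (n y : ℕ) : fund α n (y + 1) = fund (fs α n) n y := by
  rw [Nat.add_comm, fund_add_s7]; rfl

theorem fund_zero (n y : ℕ) : fund ONote.zero n y = ONote.zero := by
  induction y with
  | zero => rfl
  | succ y ih => rw [fund, ih]; rfl

/-- A path from `ω^e·m + a` to `0` has to exhaust `a` first, so it visits `ω^e·m`. -/
theorem exists_fund_head (e : ONote) (m : ℕ+) (n y : ℕ) (a : ONote)
    (h : fund (ONote.oadd e m a) n y = ONote.zero) :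
    ∃ z ≤ y, fund (ONote.oadd e m a) n z = ONote.oadd e m ONote.zero := by
  induction y generalizing a with
  | zero => cases h
  | succ y ih =>
    cases a with
    | zero => exact ⟨0, by omega, rfl⟩
    | oadd e' m' a' =>
      rw [fund_succ, fs] at h
      obtain ⟨z, hz, hz'⟩ := ih _ h
      exact ⟨z + 1, by omega, by rw [fund_succ, fs]; exact hz'⟩

theorem exists_fs_mul (p : ONote) (k n : ℕ) :
    ∃ t, fs (ONote.oadd p ⟨k + 2, by omega⟩ ONote.zero) n = ONote.oadd p ⟨k + 1, by omega⟩ t := by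
  cases p with
  | zero => exact ⟨ONote.zero, rfl⟩
  | oadd e1 m1 a1 =>
    rw [fs.eq_def]
    refine ⟨_, (if_neg (show ¬ k + 2 = 1 by omega)).trans
      (congrArg₂ _ (Subtype.ext ?_) rfl)⟩
    change max (k + 2 - 1) 1 = k + 1
    omega

/-- A path from `ω^p·(k+1)` to `0` visits `ω^p`, the summands being removed one at a time. -/
theorem exists_fund_mul (p : ONote) (k n y : ℕ)
    (h : fund (ONote.oadd p ⟨k + 1, k.succ_pos⟩ ONote.zero) n y = ONote.zero) :
    ∃ z ≤ y, fund (ONote.oadd p ⟨k + 1, k.succ_pos⟩ ONote.zero) n z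
      = ONote.oadd p 1 ONote.zero := by
  induction k generalizing y with
  | zero => exact ⟨0, by omega, rfl⟩
  | succ k ih =>
    obtain ⟨t, ht⟩ := exists_fs_mul p k n
    cases y with
    | zero => cases h
    | succ y =>
      rw [fund_succ, ht] at h
      obtain ⟨z, hz, hz'⟩ := exists_fund_head _ _ _ _ _ h
      obtain ⟨w, rfl⟩ := Nat.exists_eq_add_of_le hz
      rw [fund_add_s7, hz'] at h
      obtain ⟨v, hv, hv'⟩ := ih _ h
      refine ⟨z + v + 1, by omega, ?_⟩
      rw [fund_succ, ht, fund_add_s7, hz']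
      exact hv'

/-- For `α ≠ 0`, a path from `ω^α` to `0` visits `ω^({α}(n))` after at least one step. -/
theorem exists_fund_omega_pow_fs (α : ONote) (n y : ℕ) (hα : α ≠ ONote.zero)
    (h : fund (ONote.oadd α 1 ONote.zero) n y = ONote.zero) :
    ∃ z < y, fund (ONote.oadd α 1 ONote.zero) n (z + 1)
      = ONote.oadd (fs α n) 1 ONote.zero := by
  cases y with
  | zero => cases h
  | succ y =>
    cases α with
    | zero => exact absurd rfl hα
    | oadd e m a =>
      rw [fund_succ] at h
      cases hp : pred? (ONote.oadd e m a) with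
      | none =>
        refine ⟨0, by omega, ?_⟩
        rw [fund_succ, fund, fs]
        simp [hp]
      | some p =>
        have hfs : fs (ONote.oadd (ONote.oadd e m a) 1 ONote.zero) n
            = ONote.oadd p ⟨n + 1, n.succ_pos⟩ ONote.zero := by
          rw [fs]
          simp [hp]
        rw [hfs] at h
        obtain ⟨z, hz, hz'⟩ := exists_fund_mul p n n y h
        exact ⟨z, by omega, by rw [fund_succ, hfs, hz', fs_of_pred? n hp]⟩

theorem exists_fund_omega_pow_fund (k : ℕ) (α : ONote) (n y : ℕ)
    (h : fund (ONote.oadd α 1 ONote.zero) n y = ONote.zero) :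
    ∃ z ≤ y, fund (ONote.oadd α 1 ONote.zero) n z = ONote.oadd (fund α n k) 1 ONote.zero := by
  induction k generalizing α y with
  | zero => exact ⟨0, by omega, rfl⟩
  | succ k ih =>
    by_cases hα : α = ONote.zero
    · subst hα
      exact ⟨0, by omega, by rw [fund_zero]; rfl⟩
    · obtain ⟨z, hz, hz'⟩ := exists_fund_omega_pow_fs α n y hα h
      obtain ⟨w, rfl⟩ := Nat.exists_eq_add_of_le (Nat.succ_le_of_lt hz)
      rw [Nat.succ_eq_add_one, fund_add_s7, hz'] at h
      obtain ⟨v, hv, hv'⟩ := ih _ _ h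
      exact ⟨z + 1 + v, by omega, by rw [fund_add_s7, hz', hv', fund_succ]⟩

theorem fund_eq_zero_of_omega_pow (y : ℕ) (α : ONote) (n : ℕ)
    (h : fund (ONote.oadd α 1 ONote.zero) n y = ONote.zero) :
    fund α n y = ONote.zero := by
  induction y using Nat.strong_induction_on generalizing α with
  | _ y ih =>
    by_cases hα : α = ONote.zero
    · subst hα
      exact fund_zero n y
    · obtain ⟨z, hz, hz'⟩ := exists_fund_omega_pow_fs α n y hα h
      obtain ⟨w, rfl⟩ := Nat.exists_eq_add_of_le (Nat.succ_le_of_lt hz)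
      rw [Nat.succ_eq_add_one, fund_add_s7, hz'] at h
      have h3 := ih w (by omega) _ h
      -- `α` reaches `0` after `w + 1` steps and then stays there for the other `z`.
      rw [show z.succ + w = w + 1 + z by omega, fund_add_s7, fund_succ, h3, fund_zero]

/-- If `ω^α ↘ₙˣ 0` and `α ↘ₙ β`, then `ω^α ↘ₙˣ ω^β` and `α ↘ₙˣ 0`. -/
theorem stepAt_omega_pow (α β : ONote) (hα : α.NF) (hβ : β.NF) (n x : ℕ)
    (h1 : StepAt (ONote.oadd α 1 0) n x 0) (h2 : Step α n β) :
    StepAt (ONote.oadd α 1 0) n x (ONote.oadd β 1 0) ∧ StepAt α n x 0 := by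
  obtain ⟨y, hy, h⟩ := h1
  obtain ⟨_, k, _, rfl⟩ := h2
  obtain ⟨z, hz, hz'⟩ := exists_fund_omega_pow_fund k α n y h
  exact ⟨⟨z, hz.trans hy, hz'⟩, y, hy, fund_eq_zero_of_omega_pow y α n h⟩

end Paper
end
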